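/- Let a > 0, σ > 0, Δ ≥ 0, and let x, x′ ∈ [0, ∞) with |x − x′| ≤ Δ. Then for every α ∈ (1, ∞), the Rényi divergence of order α between the Gaussian densities with means ln(x+a) and ln(x′+a) and common standard deviation σ satisfies d_α(φ_{ln(x+a),σ} ‖ φ_{ln(x′+a),σ}) ≤ α · (ln(Δ+a) − ln(a))² / (2σ²). -/

import Mathlib

/-!
For Gaussian densities with a common standard deviation `σ`, completing the square in the exponent
gives `p ^ α * q ^ (1 - α) = exp (α (α - 1) (μ - ν)² / (2 σ²)) · r`, where `r` is the Gaussian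
density with mean `α μ + (1 - α) ν` and standard deviation `σ`. As `r` has integral one, the Rényi
divergence equals `α (μ - ν)² / (2 σ²)` (`renyiDiv_gaussPdf`). It remains to bound the difference of
the means: by concavity and monotonicity of the logarithm, `|log (x + a) - log (x' + a)|` with
`|x - x'| ≤ Δ` is largest when the smaller point is `0` and the gap is `Δ`.
-/
open Real MeasureTheory

/-- The Gaussian probability density on `ℝ` with mean `μ` and standard deviation `σ`. -/
noncomputable def gaussPdf (μ σ x : ℝ) : ℝ :=
  (σ * Real.sqrt (2 * Real.pi))⁻¹ * Real.exp (-(x - μ) ^ 2 / (2 * σ ^ 2))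

/-- The Rényi divergence of order `α` between two densities on `ℝ`
(with respect to Lebesgue measure). -/
noncomputable def renyiDiv (α : ℝ) (p q : ℝ → ℝ) : ℝ :=
  (α - 1)⁻¹ * Real.log (∫ x : ℝ, p x ^ α * q x ^ (1 - α))

lemma integral_gaussPdf (μ : ℝ) {σ : ℝ} (hσ : 0 < σ) : ∫ x : ℝ, gaussPdf μ σ x = 1 := by
  have hv : (σ ^ 2).toNNReal ≠ 0 := (Real.toNNReal_pos.2 (by positivity)).ne'
  rw [← ProbabilityTheory.integral_gaussianPDFReal_eq_one μ hv]
  congr 1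
  ext x
  have h : √(2 * π * σ ^ 2) = σ * √(2 * π) := by
    rw [Real.sqrt_mul (by positivity), Real.sqrt_sq hσ.le, mul_comm]
  simp only [gaussPdf, ProbabilityTheory.gaussianPDFReal, Real.coe_toNNReal _ (sq_nonneg σ), h]

/-- Completing the square in the exponent. -/
lemma gaussPdf_rpow_mul_rpow (μ ν α x : ℝ) {σ : ℝ} (hσ : 0 < σ) :
    gaussPdf μ σ x ^ α * gaussPdf ν σ x ^ (1 - α) =
      exp (α * (α - 1) * (μ - ν) ^ 2 / (2 * σ ^ 2)) * gaussPdf (α * μ + (1 - α) * ν) σ x := by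
  unfold gaussPdf
  have hC : 0 < (σ * √(2 * π))⁻¹ := by positivity
  generalize (σ * √(2 * π))⁻¹ = C at hC ⊢
  rw [mul_rpow hC.le (exp_pos _).le, mul_rpow hC.le (exp_pos _).le, ← exp_mul, ← exp_mul,
    mul_mul_mul_comm, ← rpow_add hC, add_sub_cancel, rpow_one, ← exp_add, mul_left_comm, ← exp_add]
  congr 2
  field_simp
  ring

/-- The Rényi divergence between two Gaussians with a common standard deviation. -/
lemma renyiDiv_gaussPdf (μ ν : ℝ) {σ α : ℝ} (hσ : 0 < σ) (hα : 1 < α) :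
    renyiDiv α (gaussPdf μ σ) (gaussPdf ν σ) = α * (μ - ν) ^ 2 / (2 * σ ^ 2) := by
  unfold renyiDiv
  simp_rw [gaussPdf_rpow_mul_rpow μ ν α _ hσ]
  rw [integral_const_mul, integral_gaussPdf _ hσ, mul_one, log_exp]
  have : α - 1 ≠ 0 := by linarith
  field_simp

/-- Among steps of length at most `Δ` in `[a, ∞)`, the one of length `Δ` starting at `a` increases
`log` the most. -/
lemma log_add_sub_log_add_le {a Δ x y : ℝ} (ha : 0 < a) (hΔ : 0 ≤ Δ) (hx : 0 ≤ x) (hy : 0 ≤ y)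
    (hxy : x - y ≤ Δ) : log (x + a) - log (y + a) ≤ log (Δ + a) - log a := by
  rw [← log_div (by positivity) (by positivity), ← log_div (by positivity) (by positivity)]
  apply log_le_log (by positivity)
  rw [div_le_div_iff₀ (by positivity) ha]
  nlinarith [mul_nonneg hΔ hy]

/-- PRzCDP guarantee of the log transformation mechanism. -/
theorem stmt2 (a σ Δ : ℝ) (ha : 0 < a) (hσ : 0 < σ) (hΔ : 0 ≤ Δ)
    (x x' : ℝ) (hx : 0 ≤ x) (hx' : 0 ≤ x') (hxx' : |x - x'| ≤ Δ)
    (α : ℝ) (hα : 1 < α) :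
    renyiDiv α (gaussPdf (Real.log (x + a)) σ) (gaussPdf (Real.log (x' + a)) σ)
      ≤ α * (Real.log (Δ + a) - Real.log a) ^ 2 / (2 * σ ^ 2) := by
  rw [renyiDiv_gaussPdf _ _ hσ hα]
  obtain ⟨h₁, h₂⟩ := abs_le.1 hxx'
  have hsq : (log (x + a) - log (x' + a)) ^ 2 ≤ (log (Δ + a) - log a) ^ 2 := by
    apply sq_le_sq'
    · linarith [log_add_sub_log_add_le ha hΔ hx' hx (by linarith)]
    · exact log_add_sub_log_add_le ha hΔ hx hx' h₂
  gcongr
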